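/- Let I be an instance with n ≥ 2 agents and n objects, and let p = (p_1,...,p_n) be given by p_j = 4n^{2n} − 2n^{j−1} for all j ∈ [n]. Then a matching μ of G_I is fair if and only if μ is a priority-p matching. -/

import Mathlib

open Finset
open scoped Classical

/-- A one-sided matching instance with `n` agents and `n` objects.  Agent `i` has a
nonempty acceptable set `accept i` and a weak order `pref i` on it
(`pref i h h'` means agent `i` weakly prefers object `h` to object `h'`). -/
structure OSMInstance (n : ℕ) where
  accept : Fin n → Finset (Fin n)
  accept_nonempty : ∀ i, (accept i).Nonempty
  pref : Fin n → Fin n → Fin n → Prop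
  pref_refl : ∀ i h, h ∈ accept i → pref i h h
  pref_trans : ∀ i h₁ h₂ h₃, h₁ ∈ accept i → h₂ ∈ accept i → h₃ ∈ accept i →
    pref i h₁ h₂ → pref i h₂ h₃ → pref i h₁ h₃
  pref_total : ∀ i h₁ h₂, h₁ ∈ accept i → h₂ ∈ accept i → pref i h₁ h₂ ∨ pref i h₂ h₁

namespace OSMInstance

variable {n : ℕ}

/-- Agent `i` strictly prefers object `h` to object `h'`. -/
def strictPref (I : OSMInstance n) (i h h' : Fin n) : Prop :=
  I.pref i h h' ∧ ¬ I.pref i h' h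

/-- The rank of the edge `(i, h)` of `G_I`: one plus the number of acceptable objects
that agent `i` strictly prefers to `h`. -/
noncomputable def edgeRank (I : OSMInstance n) (e : Fin n × Fin n) : ℕ :=
  ((I.accept e.1).filter (fun h' => I.strictPref e.1 h' e.2)).card + 1

/-- A matching of `G_I`: a set of acceptable (agent, object) pairs in which every agent
and every object occurs at most once. -/
def IsMatching (I : OSMInstance n) (μ : Finset (Fin n × Fin n)) : Prop :=
  (∀ e ∈ μ, e.2 ∈ I.accept e.1) ∧
  (∀ e ∈ μ, ∀ e' ∈ μ, e.1 = e'.1 → e = e') ∧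
  (∀ e ∈ μ, ∀ e' ∈ μ, e.2 = e'.2 → e = e')

/-- Total weight of a set of edges under the edge weights `w`. -/
def weightSum (w : Fin n × Fin n → ℝ) (μ : Finset (Fin n × Fin n)) : ℝ :=
  ∑ e ∈ μ, w e

/-- Social welfare of the set of edges `μ` under the valuation profile `v`. -/
def SW (_I : OSMInstance n) (v : Fin n → Fin n → ℝ) (μ : Finset (Fin n × Fin n)) : ℝ :=
  ∑ e ∈ μ, v e.1 e.2

/-- `μ` is a maximum-weight matching of `G_I` with respect to edge weights `w`. -/
def IsMaxWeightMatching (I : OSMInstance n) (w : Fin n × Fin n → ℝ)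
    (μ : Finset (Fin n × Fin n)) : Prop :=
  I.IsMatching μ ∧ ∀ μ', I.IsMatching μ' → weightSum w μ' ≤ weightSum w μ

/-- `μ` is a priority-`p` matching: a maximum-weight matching when every rank-`r` edge
gets weight `p r`. -/
noncomputable def IsPriorityMatching (I : OSMInstance n) (p : ℕ → ℝ)
    (μ : Finset (Fin n × Fin n)) : Prop :=
  I.IsMaxWeightMatching (fun e => p (I.edgeRank e)) μ

/-- `v` is a valuation profile consistent with the instance: values lie in `[0,1]`,
unacceptable objects have value `0`, and on acceptable objects the values represent
the weak order. -/
def Consistent (I : OSMInstance n) (v : Fin n → Fin n → ℝ) : Prop :=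
  (∀ i h, 0 ≤ v i h ∧ v i h ≤ 1) ∧
  (∀ i h, h ∉ I.accept i → v i h = 0) ∧
  (∀ i h h', h ∈ I.accept i → h' ∈ I.accept i → (I.pref i h h' ↔ v i h' ≤ v i h))

/-- Unit-sum valuations: each agent's values over acceptable objects sum to `1`. -/
def UnitSum (I : OSMInstance n) (v : Fin n → Fin n → ℝ) : Prop :=
  ∀ i, ∑ h ∈ I.accept i, v i h = 1

/-- Unit-range valuations: each agent values some acceptable object `1`, some
acceptable object `0`, and has two non-equivalent acceptable objects. -/
def UnitRange (I : OSMInstance n) (v : Fin n → Fin n → ℝ) : Prop :=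
  ∀ i, (∃ h ∈ I.accept i, v i h = 1) ∧ (∃ h ∈ I.accept i, v i h = 0) ∧
    ∃ h ∈ I.accept i, ∃ h' ∈ I.accept i, I.strictPref i h h'

/-- Agent `i` is unmatched in `μ`. -/
def Unmatched (_I : OSMInstance n) (μ : Finset (Fin n × Fin n)) (i : Fin n) : Prop :=
  ∀ h, (i, h) ∉ μ

/-- Agent `i` weakly prefers their allocation in `μ'` to their allocation in `μ`
(being unmatched is strictly worse than receiving any acceptable object). -/
def WeakImprove (I : OSMInstance n) (μ' μ : Finset (Fin n × Fin n)) (i : Fin n) : Prop :=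
  I.Unmatched μ i ∨ ∃ h h', (i, h) ∈ μ ∧ (i, h') ∈ μ' ∧ I.pref i h' h

/-- Agent `i` strictly prefers their allocation in `μ'` to their allocation in `μ`. -/
def StrictImprove (I : OSMInstance n) (μ' μ : Finset (Fin n × Fin n)) (i : Fin n) : Prop :=
  (I.Unmatched μ i ∧ ∃ h', (i, h') ∈ μ') ∨
    ∃ h h', (i, h) ∈ μ ∧ (i, h') ∈ μ' ∧ I.strictPref i h' h

/-- `μ` is a Pareto optimal matching of `G_I`. -/
def ParetoOptimal (I : OSMInstance n) (μ : Finset (Fin n × Fin n)) : Prop :=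
  I.IsMatching μ ∧
    ¬ ∃ μ', I.IsMatching μ' ∧ (∀ i, I.WeakImprove μ' μ i) ∧ ∃ i, I.StrictImprove μ' μ i

/-- `sig I μ r` is the number of rank-`r` edges of `μ` (as an integer). -/
noncomputable def sig (I : OSMInstance n) (μ : Finset (Fin n × Fin n)) (r : ℕ) : ℤ :=
  ((μ.filter (fun e => I.edgeRank e = r)).card : ℤ)

end OSMInstance

/-- Lexicographic comparison `f ≤ g` of the length-`len` tuples `(f 0, …, f (len-1))`
and `(g 0, …, g (len-1))`. -/
def LexLe (len : ℕ) (f g : ℕ → ℤ) : Prop :=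
  (∀ j < len, f j = g j) ∨ ∃ j < len, (∀ i < j, f i = g i) ∧ f j < g j

namespace OSMInstance

variable {n : ℕ}

/-- `μ` is a rank-maximal matching: it lexicographically maximizes `(s_1, …, s_n)`. -/
noncomputable def RankMaximal (I : OSMInstance n) (μ : Finset (Fin n × Fin n)) : Prop :=
  I.IsMatching μ ∧ ∀ μ', I.IsMatching μ' →
    LexLe n (fun j => I.sig μ' (j + 1)) (fun j => I.sig μ (j + 1))

/-- `μ` is a max-cardinality rank-maximal matching: it lexicographically maximizes
`(Σ_i s_i, s_1, …, s_n)`. -/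
noncomputable def MaxCardRankMaximal (I : OSMInstance n) (μ : Finset (Fin n × Fin n)) : Prop :=
  I.IsMatching μ ∧ ∀ μ', I.IsMatching μ' →
    LexLe (n + 1) (fun j => if j = 0 then (μ'.card : ℤ) else I.sig μ' j)
      (fun j => if j = 0 then (μ.card : ℤ) else I.sig μ j)

/-- `μ` is a fair matching: it lexicographically maximizes
`(Σ_i s_i, -s_n, -s_(n-1), …, -s_1)`. -/
noncomputable def FairMatching (I : OSMInstance n) (μ : Finset (Fin n × Fin n)) : Prop :=
  I.IsMatching μ ∧ ∀ μ', I.IsMatching μ' →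
    LexLe (n + 1) (fun j => if j = 0 then (μ'.card : ℤ) else -I.sig μ' (n + 1 - j))
      (fun j => if j = 0 then (μ.card : ℤ) else -I.sig μ (n + 1 - j))

end OSMInstance

/-- The priority vector for rank-maximal matchings: a rank-`r` edge gets weight
`n ^ (2 * (n - r + 1))`. -/
noncomputable def pRankMaximal (n : ℕ) : ℕ → ℝ :=
  fun r => (n : ℝ) ^ (2 * (n - r + 1))

/-- The priority vector for max-cardinality rank-maximal matchings: a rank-`r` edge gets
weight `n ^ (2 * n) + n ^ (2 * (n - r))`. -/
noncomputable def pMaxCardRankMaximal (n : ℕ) : ℕ → ℝ :=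
  fun r => (n : ℝ) ^ (2 * n) + (n : ℝ) ^ (2 * (n - r))

/-- The priority vector for fair matchings: a rank-`r` edge gets weight
`4 * n ^ (2 * n) - 2 * n ^ (r - 1)`. -/
noncomputable def pFairVec (n : ℕ) : ℕ → ℝ :=
  fun r => 4 * (n : ℝ) ^ (2 * n) - 2 * (n : ℝ) ^ (r - 1)

/-- The set `𝕡` of the three priority vectors of interest. -/
noncomputable def PrioritySet (n : ℕ) : Set (ℕ → ℝ) :=
  {pRankMaximal n, pMaxCardRankMaximal n, pFairVec n}

/-- The four matching properties considered: Pareto optimal, rank-maximal,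
max-cardinality rank-maximal, and fair. -/
inductive MatchProp where
  | po | rm | mcrm | fair

/-- `μ` satisfies the property `X` with respect to the instance `I`. -/
noncomputable def SatisfiesProp {n : ℕ} (X : MatchProp) (I : OSMInstance n)
    (μ : Finset (Fin n × Fin n)) : Prop :=
  match X with
  | .po => I.ParetoOptimal μ
  | .rm => I.RankMaximal μ
  | .mcrm => I.MaxCardRankMaximal μ
  | .fair => I.FairMatching μ

/-!
Count an unmatched agent as one served at rank `n + 1` with priority `0`. Maximizing
`(Σ s_i, -s_n, …, -s_1)` then means lexicographically minimizing the profile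
`(s_(n+1), s_n, …, s_1)`, whose entries are nonnegative and always sum to `n`. When two such
profiles first differ at rank `r + 1`, at least one agent of the worse one moves up to rank `r` or
better, which gains at least `p_r - p_(r+1)`, while at most `n - 1` agents already better off can
slip, each losing at most `p_1 - p_r`. So the comparison of weights agrees with the lexicographic
one as soon as `(n - 1) (p_1 - p_r) < p_r - p_(r+1)` for every `r`.
-/

theorem lexLe_add_left {len : ℕ} (c f g : ℕ → ℤ) :
    LexLe len (c + f) (c + g) ↔ LexLe len f g := by
  simp only [LexLe, Pi.add_apply, add_right_inj, add_lt_add_iff_left]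

theorem exists_first_lt_of_not_lexLe {len : ℕ} {f g : ℕ → ℤ} (h : ¬ LexLe len f g) :
    ∃ j < len, (∀ i < j, f i = g i) ∧ g j < f j := by
  have hne : ∃ j, j < len ∧ f j ≠ g j := by
    by_contra! heq
    exact h (Or.inl heq)
  have hlen := (Nat.find_spec hne).1
  have hagree : ∀ i < Nat.find hne, f i = g i := fun i hi => by
    by_contra hi'
    exact Nat.find_min hne hi ⟨hi.trans hlen, hi'⟩
  refine ⟨Nat.find hne, hlen, hagree, lt_of_not_ge fun hle => h (Or.inr ?_)⟩
  exact ⟨_, hlen, hagree, lt_of_le_of_ne hle (Nat.find_spec hne).2⟩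

theorem sum_range_eq_add_add_sum_Ico {M : Type*} [AddCommMonoid M] (f : ℕ → M) {j n : ℕ}
    (hj : j < n) :
    ∑ i ∈ range n, f i = ∑ i ∈ range j, f i + f j + ∑ i ∈ Ico (j + 1) n, f i := by
  rw [← sum_range_succ, sum_range_add_sum_Ico _ hj]

section LexWeights

variable {R : Type*} [CommRing R] [LinearOrder R] [IsStrictOrderedRing R]

/-- The weights `u 0, …, u m` are steep enough to turn the lexicographic comparison of
nonnegative integer tuples with sum `N` into a comparison of weighted sums: a step up from any
position outweighs `N - 1` drops from the last position to the one stepped on. -/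
def LexSteep (N : ℤ) (m : ℕ) (u : ℕ → R) : Prop :=
  ∀ j < m, ((N : R) - 1) * (u m - u (j + 1)) < u (j + 1) - u j

variable {N : ℤ} {m : ℕ} {u : ℕ → R}

theorem LexSteep.monotoneOn (hu : LexSteep N m u) (hN : 1 ≤ N) : MonotoneOn u (Set.Iic m) := by
  have hN' : (0 : R) ≤ (N : R) - 1 := sub_nonneg.2 (by exact_mod_cast hN)
  have step {j : ℕ} (hj : j < m) (htop : u (j + 1) ≤ u m) : u j ≤ u (j + 1) :=
    sub_nonneg.1 ((mul_nonneg hN' (sub_nonneg.2 htop)).trans (hu j hj).le)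
  have le_top {j : ℕ} (hj : j ≤ m) : u j ≤ u m := by
    induction hj using Nat.decreasingInduction with
    | self => exact le_rfl
    | of_succ j hj ih => exact (step hj ih).trans ih
  exact monotoneOn_of_le_succ Set.ordConnected_Iic fun j _ _ hj => step hj (le_top hj)

theorem LexSteep.mul_sub_lt_mul_sub (hu : LexSteep N m u) (hN : 1 ≤ N) {j : ℕ} (hj : j < m)
    {x k : R} (hx : x ≤ N - 1) (hk : 1 ≤ k) :
    x * (u m - u (j + 1)) < k * (u (j + 1) - u j) := by
  have htop : 0 ≤ u m - u (j + 1) := sub_nonneg.2 (hu.monotoneOn hN hj (le_refl m) hj)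
  have hgap : 0 ≤ u (j + 1) - u j := sub_nonneg.2 (hu.monotoneOn hN hj.le hj j.le_succ)
  calc x * (u m - u (j + 1)) ≤ (N - 1) * (u m - u (j + 1)) := mul_le_mul_of_nonneg_right hx htop
    _ < u (j + 1) - u j := hu j hj
    _ ≤ k * (u (j + 1) - u j) := le_mul_of_one_le_left hgap hk

variable {a b : ℕ → ℤ}

theorem sum_Ico_mul_le_of_monotoneOn (hu : MonotoneOn u (Set.Iic m)) (ha : ∀ i, 0 ≤ a i) {j : ℕ} :
    ∑ i ∈ Ico j (m + 1), (a i : R) * u i ≤ (∑ i ∈ Ico j (m + 1), a i : ℤ) * u m := by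
  rw [Int.cast_sum, sum_mul]
  refine sum_le_sum fun i hi => mul_le_mul_of_nonneg_left ?_ (Int.cast_nonneg (ha i))
  have him : i ≤ m := Nat.le_of_lt_succ (mem_Ico.1 hi).2
  exact hu him (le_refl m) him

theorem le_sum_Ico_mul_of_monotoneOn (hu : MonotoneOn u (Set.Iic m)) (ha : ∀ i, 0 ≤ a i) {j : ℕ}
    (hj : j ≤ m) :
    (∑ i ∈ Ico j (m + 1), a i : ℤ) * u j ≤ ∑ i ∈ Ico j (m + 1), (a i : R) * u i := by
  rw [Int.cast_sum, sum_mul]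
  refine sum_le_sum fun i hi => mul_le_mul_of_nonneg_left ?_ (Int.cast_nonneg (ha i))
  exact hu hj (Nat.le_of_lt_succ (mem_Ico.1 hi).2) (mem_Ico.1 hi).1

theorem LexSteep.sum_mul_lt_of_first_lt (hu : LexSteep N m u) (ha : ∀ i, 0 ≤ a i)
    (hb : ∀ i, 0 ≤ b i) (hsa : ∑ i ∈ range (m + 1), a i = N)
    (hsb : ∑ i ∈ range (m + 1), b i = N) {j : ℕ} (hj : j < m + 1)
    (hagree : ∀ i < j, a i = b i) (hlt : b j < a j) :
    ∑ i ∈ range (m + 1), (a i : R) * u i < ∑ i ∈ range (m + 1), (b i : R) * u i := by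
  have hhead : ∑ i ∈ range j, a i = ∑ i ∈ range j, b i :=
    sum_congr rfl fun i hi => hagree i (mem_range.1 hi)
  have hhead_mul : ∑ i ∈ range j, (a i : R) * u i = ∑ i ∈ range j, (b i : R) * u i :=
    sum_congr rfl fun i hi => by rw [hagree i (mem_range.1 hi)]
  have hhead_nonneg : 0 ≤ ∑ i ∈ range j, b i := sum_nonneg fun i _ => hb i
  have htail_nonneg : 0 ≤ ∑ i ∈ Ico (j + 1) (m + 1), a i := sum_nonneg fun i _ => ha i
  have hbj : 0 ≤ b j := hb j
  rw [sum_range_eq_add_add_sum_Ico _ hj] at hsa hsb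
  have hN : 1 ≤ N := by omega
  have hmono := hu.monotoneOn hN
  have hjm : j < m := by
    by_contra hmj
    rw [Ico_eq_empty_of_le (by omega), sum_empty] at hsa hsb
    omega
  have hupper := sum_Ico_mul_le_of_monotoneOn hmono ha (j := j + 1)
  have hlower := le_sum_Ico_mul_of_monotoneOn hmono hb (j := j + 1) hjm
  rw [sum_range_eq_add_add_sum_Ico _ hj, sum_range_eq_add_add_sum_Ico _ hj, hhead_mul]
  set A := ∑ i ∈ Ico (j + 1) (m + 1), a i
  set B := ∑ i ∈ Ico (j + 1) (m + 1), b i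
  have hA : (A : R) ≤ N - 1 := by exact_mod_cast (by omega : A ≤ N - 1)
  have hB : (B : R) = A + (a j - b j) := by exact_mod_cast (by omega : B = A + (a j - b j))
  have hstep : (1 : R) ≤ a j - b j := by exact_mod_cast (by omega : 1 ≤ a j - b j)
  have hexchange := hu.mul_sub_lt_mul_sub hN hjm hA hstep
  rw [hB] at hlower
  linarith

theorem LexSteep.lexLe_neg_iff_sum_mul_le (hu : LexSteep N m u) (ha : ∀ i, 0 ≤ a i)
    (hb : ∀ i, 0 ≤ b i) (hsa : ∑ i ∈ range (m + 1), a i = N)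
    (hsb : ∑ i ∈ range (m + 1), b i = N) :
    LexLe (m + 1) (-a) (-b) ↔
      ∑ i ∈ range (m + 1), (a i : R) * u i ≤ ∑ i ∈ range (m + 1), (b i : R) * u i := by
  constructor
  · rintro (heq | ⟨j, hj, hagree, hlt⟩)
    · refine (sum_congr rfl fun i hi => ?_).le
      rw [neg_injective (heq i (mem_range.1 hi))]
    · exact (hu.sum_mul_lt_of_first_lt ha hb hsa hsb hj
        (fun i hi => neg_injective (hagree i hi)) (neg_lt_neg_iff.1 hlt)).le
  · contrapose!
    intro hlex
    obtain ⟨j, hj, hagree, hlt⟩ := exists_first_lt_of_not_lexLe hlex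
    exact hu.sum_mul_lt_of_first_lt hb ha hsb hsa hj
      (fun i hi => (neg_injective (hagree i hi)).symm) (neg_lt_neg_iff.1 hlt)

end LexWeights

namespace OSMInstance

variable {n : ℕ} {I : OSMInstance n} {μ : Finset (Fin n × Fin n)} {p : ℕ → ℝ}

theorem one_le_edgeRank (I : OSMInstance n) (e : Fin n × Fin n) : 1 ≤ I.edgeRank e :=
  Nat.le_add_left 1 _

theorem edgeRank_le (I : OSMInstance n) (e : Fin n × Fin n) : I.edgeRank e ≤ n := by
  have hirrefl : e.2 ∉ (I.accept e.1).filter fun h => I.strictPref e.1 h e.2 := fun hmem =>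
    (mem_filter.1 hmem).2.2 (mem_filter.1 hmem).2.1
  exact (card_lt_univ_of_notMem hirrefl).trans_eq (Fintype.card_fin n)

theorem IsMatching.card_le (hμ : I.IsMatching μ) : μ.card ≤ n := by
  simpa only [card_univ, Fintype.card_fin] using
    card_le_card_of_injOn Prod.fst (fun e _ => mem_univ e.1) hμ.2.1

theorem sum_comp_edgeRank {R : Type*} [Ring R] (I : OSMInstance n) (μ : Finset (Fin n × Fin n))
    (q : ℕ → R) :
    ∑ e ∈ μ, q (I.edgeRank e) = ∑ j ∈ range n, (I.sig μ (n - j) : R) * q (n - j) := by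
  have hmem : ∀ e ∈ μ, n - I.edgeRank e ∈ range n := fun e _ => by
    have := I.one_le_edgeRank e
    have := I.edgeRank_le e
    exact mem_range.2 (by omega)
  have hfiber {j : ℕ} (hj : j ∈ range n) :
      (μ.filter fun e => n - I.edgeRank e = j) = μ.filter fun e => I.edgeRank e = n - j := by
    refine filter_congr fun e _ => ?_
    have := mem_range.1 hj
    have := I.edgeRank_le e
    omega
  rw [← sum_fiberwise_of_maps_to hmem]
  refine sum_congr rfl fun j hj => ?_
  rw [hfiber hj, sum_congr rfl fun e he => by rw [(mem_filter.1 he).2], sum_const, nsmul_eq_mul,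
    sig, Int.cast_natCast]

/-- The tuple `(s_(n+1), s_n, …, s_1)` of `μ`, where `s_(n+1)`, the number of unmatched agents,
treats being unmatched as a last resort of rank `n + 1`. -/
noncomputable def rankProfile (I : OSMInstance n) (μ : Finset (Fin n × Fin n)) : ℕ → ℤ
  | 0 => n - μ.card
  | j + 1 => I.sig μ (n - j)

/-- The weights `(0, p_n, …, p_1)` of the entries of a rank profile. -/
def profileWeight (n : ℕ) (p : ℕ → ℝ) : ℕ → ℝ
  | 0 => 0
  | j + 1 => p (n - j)

theorem IsMatching.rankProfile_nonneg (hμ : I.IsMatching μ) : ∀ j, 0 ≤ I.rankProfile μ j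
  | 0 => sub_nonneg.2 (by exact_mod_cast hμ.card_le)
  | _ + 1 => Int.natCast_nonneg _

theorem sum_rankProfile (I : OSMInstance n) (μ : Finset (Fin n × Fin n)) :
    ∑ j ∈ range (n + 1), I.rankProfile μ j = n := by
  have hcard := I.sum_comp_edgeRank μ fun _ => (1 : ℤ)
  simp only [sum_const, nsmul_eq_mul, mul_one, Int.cast_id] at hcard
  simp only [sum_range_succ', rankProfile, ← hcard, add_sub_cancel]

theorem weightSum_eq_sum_rankProfile_mul (I : OSMInstance n) (μ : Finset (Fin n × Fin n))
    (p : ℕ → ℝ) :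
    weightSum (fun e => p (I.edgeRank e)) μ =
      ∑ j ∈ range (n + 1), (I.rankProfile μ j : ℝ) * profileWeight n p j := by
  simp only [weightSum, I.sum_comp_edgeRank, sum_range_succ', rankProfile, profileWeight,
    mul_zero, add_zero]

theorem fairMatching_iff_rankProfile :
    I.FairMatching μ ↔ I.IsMatching μ ∧ ∀ μ', I.IsMatching μ' →
      LexLe (n + 1) (-I.rankProfile μ') (-I.rankProfile μ) := by
  have hshift (ν : Finset (Fin n × Fin n)) :
      (fun j => if j = 0 then (ν.card : ℤ) else -I.sig ν (n + 1 - j)) =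
        (fun j => if j = 0 then (n : ℤ) else 0) + -I.rankProfile ν := by
    ext (_ | j) <;> simp [rankProfile]
  simp only [FairMatching, hshift, lexLe_add_left]

theorem lexSteep_profileWeight
    (hgap : ∀ r, 1 ≤ r → r < n → ((n : ℝ) - 1) * (p 1 - p r) < p r - p (r + 1))
    (hlast : ((n : ℝ) - 1) * (p 1 - p n) < p n) :
    LexSteep n n (profileWeight n p) := by
  intro j hj
  have htop : profileWeight n p n = p 1 := by
    obtain ⟨m, rfl⟩ := Nat.exists_eq_add_one_of_ne_zero (Nat.ne_zero_of_lt hj)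
    rw [profileWeight, Nat.add_sub_cancel_left]
  rw [htop, Int.cast_natCast]
  cases j with
  | zero => simpa only [profileWeight, Nat.sub_zero, sub_zero] using hlast
  | succ j =>
    have hrank : n - j = n - (j + 1) + 1 := by omega
    simpa only [profileWeight, hrank] using hgap (n - (j + 1)) (by omega) (by omega)

end OSMInstance

theorem pFairVec_mul_sub_lt_sub {n r : ℕ} (hr : 1 ≤ r) (hrn : r < n) :
    ((n : ℝ) - 1) * (pFairVec n 1 - pFairVec n r) < pFairVec n r - pFairVec n (r + 1) := by
  obtain ⟨k, rfl⟩ := Nat.exists_eq_add_of_le' hr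
  have hn : (0 : ℝ) < n - 1 := sub_pos.2 (by exact_mod_cast hr.trans_lt hrn)
  simp only [pFairVec, Nat.add_sub_cancel, Nat.sub_self, pow_zero, pow_succ]
  linarith

theorem pFairVec_mul_sub_lt {n : ℕ} (hn : 0 < n) :
    ((n : ℝ) - 1) * (pFairVec n 1 - pFairVec n n) < pFairVec n n := by
  have hn' : (1 : ℝ) ≤ n := by exact_mod_cast hn
  have hpow : (n : ℝ) ^ n ≤ (n : ℝ) ^ (2 * n) := pow_le_pow_right₀ hn' (by omega)
  have hone : (1 : ℝ) ≤ (n : ℝ) ^ (2 * n) := one_le_pow₀ hn'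
  rw [← pow_sub_one_mul hn.ne'] at hpow
  simp only [pFairVec, Nat.sub_self, pow_zero]
  linarith

theorem fair_iff_priority_general {n : ℕ} (I : OSMInstance n) (μ : Finset (Fin n × Fin n))
    {p : ℕ → ℝ}
    (hgap : ∀ r, 1 ≤ r → r < n → ((n : ℝ) - 1) * (p 1 - p r) < p r - p (r + 1))
    (hlast : ((n : ℝ) - 1) * (p 1 - p n) < p n) :
    I.FairMatching μ ↔ I.IsPriorityMatching p μ := by
  rw [OSMInstance.fairMatching_iff_rankProfile]
  refine and_congr_right fun hμ => forall₂_congr fun μ' hμ' => ?_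
  rw [I.weightSum_eq_sum_rankProfile_mul, I.weightSum_eq_sum_rankProfile_mul]
  exact (OSMInstance.lexSteep_profileWeight hgap hlast).lexLe_neg_iff_sum_mul_le
    hμ'.rankProfile_nonneg hμ.rankProfile_nonneg (I.sum_rankProfile μ') (I.sum_rankProfile μ)

/-- a matching is fair iff it is a priority-`p` matching for
`p_j = 4n^(2n) - 2n^(j-1)`. -/
theorem fair_iff_priority {n : ℕ} (hn : 2 ≤ n) (I : OSMInstance n)
    (μ : Finset (Fin n × Fin n)) (hμ : I.IsMatching μ) :
    I.FairMatching μ ↔ I.IsPriorityMatching (pFairVec n) μ :=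
  fair_iff_priority_general I μ (fun _ hr hrn => pFairVec_mul_sub_lt_sub hr hrn)
    (pFairVec_mul_sub_lt (by omega))
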